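/- Let h : ℝ → [0,∞) and t : ℝ → ℝ be measurable, and suppose Z(η) := ∫_ℝ h(x)·exp(η·t(x)) dx is finite and positive for all η in an open interval I ⊆ ℝ. Let F(c; η) := ∫_{-∞}^{c} h(x)·exp(η·t(x) − log Z(η)) dx, and fix v < w such that g(η) := log(F(w; η) − F(v; η)) is well-defined and twice differentiable on I. Then for every η₀ ∈ I, the variance of t under the truncated density p̂(x | η₀) = 1_{[v,w]}(x)·h(x)·exp(η₀·t(x) − Â(η₀)), where Â(η₀) = log ∫_v^w h(x)·exp(η₀·t(x)) dx, satisfies Var_{p̂}[t] = Var_{p}[t] + g″(η₀), where Var_{p}[t] is the variance of t under the untruncated density p(x | η₀) = h(x)·exp(η₀·t(x) − log Z(η₀)). -/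

import Mathlib

open MeasureTheory

open ProbabilityTheory Set Filter
open scoped Topology

/-!
Let `μ` be the measure with density `h`, so that the family is `μ` tilted by `η * t` and `A` is the
cumulant-generating function of `t` under `μ`. The truncated family is the same construction for
`μ.restrict (Icc v w)`. The probability of `[v, w]` is a quotient of two moment-generating
functions, hence `g = Â - A` wherever it is defined, and the variance of a tilted measure is the
second derivative of its cumulant-generating function.
-/

section Tilted

variable {Ω : Type*} {mΩ : MeasurableSpace Ω} {μ : Measure Ω} {X : Ω → ℝ} {S : Set Ω} {η : ℝ}

lemma interior_integrableExpSet_subset_restrict :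
    interior (integrableExpSet X μ) ⊆ interior (integrableExpSet X (μ.restrict S)) :=
  interior_mono fun _ hη ↦ Integrable.restrict hη

lemma tilted_mul_real_eq_mgf_div_mgf (hS : MeasurableSet S) :
    (μ.tilted (η * X ·)).real S = mgf X (μ.restrict S) η / mgf X μ η := by
  rw [← setIntegral_one_eq_measureReal, setIntegral_tilted_mul_eq_mgf' _ hS]
  simp only [smul_eq_mul, mul_one]
  rw [integral_div, mgf, mgf]

lemma log_tilted_mul_real_eq_cgf_sub_cgf (hS : MeasurableSet S) (hμS : μ S ≠ 0)
    (hη : η ∈ integrableExpSet X μ) :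
    Real.log ((μ.tilted (η * X ·)).real S) = cgf X (μ.restrict S) η - cgf X μ η := by
  have hμ : μ ≠ 0 := fun h ↦ hμS (by simp [h])
  have hrestrict : μ.restrict S ≠ 0 := mt Measure.restrict_eq_zero.mp hμS
  rw [tilted_mul_real_eq_mgf_div_mgf hS,
    Real.log_div (mgf_pos' hrestrict (Integrable.restrict hη)).ne' (mgf_pos' hμ hη).ne', cgf, cgf]

theorem variance_tilted_mul_restrict (hS : MeasurableSet S) (hμS : μ S ≠ 0)
    (hη : η ∈ interior (integrableExpSet X μ)) :
    Var[X; (μ.restrict S).tilted (η * X ·)] = Var[X; μ.tilted (η * X ·)] +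
      iteratedDeriv 2 (fun s ↦ Real.log ((μ.tilted (s * X ·)).real S)) η := by
  have hηS := interior_integrableExpSet_subset_restrict (S := S) hη
  have hlog : (fun s ↦ Real.log ((μ.tilted (s * X ·)).real S)) =ᶠ[𝓝 η]
      cgf X (μ.restrict S) - cgf X μ := by
    filter_upwards [mem_interior_iff_mem_nhds.mp hη] with s hs
    exact log_tilted_mul_real_eq_cgf_sub_cgf hS hμS hs
  rw [hlog.iteratedDeriv_eq, iteratedDeriv_sub (analyticAt_cgf hηS).contDiffAt
    (analyticAt_cgf hη).contDiffAt, variance_tilted_mul hηS, variance_tilted_mul hη,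
    add_sub_cancel]

lemma variance_tilted_mul_eq_sub (hη : η ∈ interior (integrableExpSet X μ)) :
    Var[X; μ.tilted (η * X ·)] =
      (μ.tilted (η * X ·))[X ^ 2] - (μ.tilted (η * X ·))[X] ^ 2 := by
  rcases eq_zero_or_neZero μ with rfl | _
  · simp
  · have := isProbabilityMeasure_tilted (interior_subset (s := integrableExpSet X μ) hη)
    exact variance_eq_sub (memLp_tilted_mul hη 2)

end Tilted

section Density

variable {Ω : Type*} {mΩ : MeasurableSpace Ω} {ν : Measure Ω} {h t : Ω → ℝ} {S : Set Ω} {η : ℝ}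

lemma integral_withDensity_ofReal (hh : AEMeasurable h ν) (hh0 : 0 ≤ᵐ[ν] h) (f : Ω → ℝ) :
    ∫ x, f x ∂ν.withDensity (fun x ↦ ENNReal.ofReal (h x)) = ∫ x, h x * f x ∂ν := by
  rw [integral_withDensity_eq_integral_toReal_smul₀ hh.ennreal_ofReal (by simp)]
  refine integral_congr_ae ?_
  filter_upwards [hh0] with x hx
  rw [ENNReal.toReal_ofReal hx, smul_eq_mul]

lemma integrable_withDensity_ofReal_iff (hh : AEMeasurable h ν) (hh0 : 0 ≤ᵐ[ν] h) {f : Ω → ℝ} :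
    Integrable f (ν.withDensity fun x ↦ ENNReal.ofReal (h x)) ↔
      Integrable (fun x ↦ h x * f x) ν := by
  rw [integrable_withDensity_iff_integrable_smul₀' hh.ennreal_ofReal (by simp)]
  refine integrable_congr ?_
  filter_upwards [hh0] with x hx
  rw [ENNReal.toReal_ofReal hx, smul_eq_mul]

lemma mem_interior_integrableExpSet_withDensity_ofReal (hh : AEMeasurable h ν) (hh0 : 0 ≤ᵐ[ν] h)
    (hη : ∀ᶠ s in 𝓝 η, Integrable (fun x ↦ h x * Real.exp (s * t x)) ν) :
    η ∈ interior (integrableExpSet t (ν.withDensity fun x ↦ ENNReal.ofReal (h x))) :=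
  mem_interior_iff_mem_nhds.mpr <| hη.mono fun _ ↦ (integrable_withDensity_ofReal_iff hh hh0).mpr

lemma cgf_withDensity_ofReal (hh : AEMeasurable h ν) (hh0 : 0 ≤ᵐ[ν] h) :
    cgf t (ν.withDensity fun x ↦ ENNReal.ofReal (h x)) η =
      Real.log (∫ x, h x * Real.exp (η * t x) ∂ν) := by
  rw [cgf, mgf, integral_withDensity_ofReal hh hh0]

lemma integral_tilted_withDensity_ofReal (hh : AEMeasurable h ν) (hh0 : 0 ≤ᵐ[ν] h)
    (hη : Integrable (fun x ↦ h x * Real.exp (η * t x)) ν) {c : ℝ}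
    (hc : c = Real.log (∫ x, h x * Real.exp (η * t x) ∂ν)) (f : Ω → ℝ) :
    ∫ x, f x ∂(ν.withDensity fun x ↦ ENNReal.ofReal (h x)).tilted (η * t ·) =
      ∫ x, f x * (h x * Real.exp (η * t x - c)) ∂ν := by
  rw [integral_tilted_mul_eq_cgf _ ((integrable_withDensity_ofReal_iff hh hh0).mpr hη),
    integral_withDensity_ofReal hh hh0, cgf_withDensity_ofReal hh hh0, hc]
  refine integral_congr_ae (.of_forall fun x ↦ ?_)
  simp only [smul_eq_mul]
  ring

lemma integrable_mul_exp_sub (hη : Integrable (fun x ↦ h x * Real.exp (η * t x)) ν) (c : ℝ) :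
    Integrable (fun x ↦ h x * Real.exp (η * t x - c)) ν := by
  simpa only [Real.exp_sub, mul_div_assoc] using hη.div_const (Real.exp c)

lemma tilted_withDensity_ofReal_real (hh : AEMeasurable h ν) (hh0 : 0 ≤ᵐ[ν] h)
    (hη : Integrable (fun x ↦ h x * Real.exp (η * t x)) ν) {c : ℝ}
    (hc : c = Real.log (∫ x, h x * Real.exp (η * t x) ∂ν)) (hS : MeasurableSet S) :
    ((ν.withDensity fun x ↦ ENNReal.ofReal (h x)).tilted (η * t ·)).real S =
      ∫ x in S, h x * Real.exp (η * t x - c) ∂ν := by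
  rw [← integral_indicator_one hS, integral_tilted_withDensity_ofReal hh hh0 hη hc,
    ← integral_indicator hS]
  refine integral_congr_ae (.of_forall fun x ↦ ?_)
  by_cases hx : x ∈ S <;> simp [hx]

lemma variance_tilted_withDensity_ofReal (hh : AEMeasurable h ν) (hh0 : 0 ≤ᵐ[ν] h)
    (hη : ∀ᶠ s in 𝓝 η, Integrable (fun x ↦ h x * Real.exp (s * t x)) ν) {c : ℝ}
    (hc : c = Real.log (∫ x, h x * Real.exp (η * t x) ∂ν)) :
    Var[t; (ν.withDensity fun x ↦ ENNReal.ofReal (h x)).tilted (η * t ·)] =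
      (∫ x, t x ^ 2 * (h x * Real.exp (η * t x - c)) ∂ν) -
        (∫ x, t x * (h x * Real.exp (η * t x - c)) ∂ν) ^ 2 := by
  rw [variance_tilted_mul_eq_sub (mem_interior_integrableExpSet_withDensity_ofReal hh hh0 hη),
    integral_tilted_withDensity_ofReal hh hh0 hη.self_of_nhds hc,
    integral_tilted_withDensity_ofReal hh hh0 hη.self_of_nhds hc]
  simp only [Pi.pow_apply]

theorem truncated_variance_identity_general (hh : AEMeasurable h ν) (hh0 : 0 ≤ᵐ[ν] h)
    (hfin : ∀ᶠ s in 𝓝 η, Integrable (fun x ↦ h x * Real.exp (s * t x)) ν)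
    {A : ℝ → ℝ} (hA : ∀ s, A s = Real.log (∫ x, h x * Real.exp (s * t x) ∂ν))
    (hS : MeasurableSet S) (hpos : 0 < ∫ x in S, h x * Real.exp (η * t x - A η) ∂ν)
    {g : ℝ → ℝ}
    (hg : ∀ᶠ s in 𝓝 η, g s = Real.log (∫ x in S, h x * Real.exp (s * t x - A s) ∂ν))
    {Ahat : ℝ → ℝ}
    (hAhat : ∀ s, Ahat s = Real.log (∫ x in S, h x * Real.exp (s * t x) ∂ν)) :
    (∫ x in S, t x ^ 2 * (h x * Real.exp (η * t x - Ahat η)) ∂ν)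
        - (∫ x in S, t x * (h x * Real.exp (η * t x - Ahat η)) ∂ν) ^ 2
      = ((∫ x, t x ^ 2 * (h x * Real.exp (η * t x - A η)) ∂ν)
          - (∫ x, t x * (h x * Real.exp (η * t x - A η)) ∂ν) ^ 2)
        + deriv (deriv g) η := by
  set μ := ν.withDensity fun x ↦ ENNReal.ofReal (h x) with hμ
  have hmem : η ∈ interior (integrableExpSet t μ) :=
    mem_interior_integrableExpSet_withDensity_ofReal hh hh0 hfin
  have hprob {s : ℝ} (hs : Integrable (fun x ↦ h x * Real.exp (s * t x)) ν) :
      (μ.tilted (s * t ·)).real S = ∫ x in S, h x * Real.exp (s * t x - A s) ∂ν :=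
    tilted_withDensity_ofReal_real hh hh0 hs (hA s) hS
  have hμS : μ S ≠ 0 := fun hzero ↦ hpos.ne' <| by
    rw [← hprob hfin.self_of_nhds, measureReal_def,
      tilted_absolutelyContinuous μ _ hzero, ENNReal.toReal_zero]
  have hlog : g =ᶠ[𝓝 η] fun s ↦ Real.log ((μ.tilted (s * t ·)).real S) := by
    filter_upwards [hg, hfin] with s hgs hs
    rw [hgs, hprob hs]
  rw [← variance_tilted_withDensity_ofReal hh hh0 hfin (hA η),
    ← variance_tilted_withDensity_ofReal hh.restrict (ae_restrict_of_ae hh0)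
      (hfin.mono fun _ hs ↦ hs.restrict) (hAhat η),
    ← restrict_withDensity hS, ← hμ, variance_tilted_mul_restrict hS hμS hmem,
    ← hlog.iteratedDeriv_eq, iteratedDeriv_succ, iteratedDeriv_one]

end Density

lemma setIntegral_Iic_sub_setIntegral_Iic {ν : Measure ℝ} [NullSingletonClass ν] {f : ℝ → ℝ}
    (hf : Integrable f ν) {v w : ℝ} (hvw : v ≤ w) :
    (∫ x in Iic w, f x ∂ν) - ∫ x in Iic v, f x ∂ν = ∫ x in Icc v w, f x ∂ν := by
  rw [intervalIntegral.integral_Iic_sub_Iic hf.integrableOn hf.integrableOn,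
    intervalIntegral.integral_of_le hvw, integral_Icc_eq_integral_Ioc]

/-- Variance identity of Lemma 1: the variance of `t` under the exponential family
truncated to `[v,w]` equals the variance under the untruncated family plus the second
derivative of `g(η) = log(F(w;η) - F(v;η))`. -/
theorem truncated_variance_identity
    (h t : ℝ → ℝ) (hh : Measurable h) (hh0 : ∀ x, 0 ≤ h x) (ht : Measurable t)
    (a b : ℝ)
    (hfin : ∀ η ∈ Set.Ioo a b, Integrable (fun x => h x * Real.exp (η * t x)) volume)
    (hpos : ∀ η ∈ Set.Ioo a b, 0 < ∫ x, h x * Real.exp (η * t x))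
    (A : ℝ → ℝ) (hA : ∀ η, A η = Real.log (∫ x, h x * Real.exp (η * t x)))
    (F : ℝ → ℝ → ℝ)
    (hF : ∀ c η, F c η = ∫ x in Set.Iic c, h x * Real.exp (η * t x - A η))
    (v w : ℝ) (hvw : v < w)
    (hwell : ∀ η ∈ Set.Ioo a b, 0 < F w η - F v η)
    (g : ℝ → ℝ) (hg : ∀ η, g η = Real.log (F w η - F v η))
    (hgdiff : ∀ η ∈ Set.Ioo a b, DifferentiableAt ℝ g η)
    (hgdiff2 : ∀ η ∈ Set.Ioo a b, DifferentiableAt ℝ (deriv g) η)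
    (Ahat : ℝ → ℝ)
    (hAhat : ∀ η, Ahat η = Real.log (∫ x in Set.Icc v w, h x * Real.exp (η * t x))) :
    ∀ η₀ ∈ Set.Ioo a b,
      (∫ x in Set.Icc v w, (t x) ^ 2 * (h x * Real.exp (η₀ * t x - Ahat η₀)))
          - (∫ x in Set.Icc v w, t x * (h x * Real.exp (η₀ * t x - Ahat η₀))) ^ 2
        = ((∫ x, (t x) ^ 2 * (h x * Real.exp (η₀ * t x - A η₀)))
            - (∫ x, t x * (h x * Real.exp (η₀ * t x - A η₀))) ^ 2)
          + deriv (deriv g) η₀ := by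
  have hprob : ∀ η ∈ Ioo a b,
      F w η - F v η = ∫ x in Icc v w, h x * Real.exp (η * t x - A η) := fun η hη ↦ by
    rw [hF, hF, setIntegral_Iic_sub_setIntegral_Iic
      (integrable_mul_exp_sub (hfin η hη) (A η)) hvw.le]
  intro η₀ hη₀
  have hnhds : Ioo a b ∈ 𝓝 η₀ := Ioo_mem_nhds hη₀.1 hη₀.2
  exact truncated_variance_identity_general hh.aemeasurable (.of_forall hh0)
    (eventually_of_mem hnhds hfin) hA measurableSet_Icc (hprob η₀ hη₀ ▸ hwell η₀ hη₀)
    (eventually_of_mem hnhds fun η hη ↦ by rw [hg, hprob η hη]) hAhat
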